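/- Let α > 3/2. For λ > π set θ(λ) = π⁻¹ arctan( π⁻¹ √(λ²−π²) ), ρ̃(u;λ) = (u^{θ(λ)} − 1)/(1 − u²) + (u^{−θ(λ)} − 1)/(1 − u⁻²), and ã(t,s;λ) = (λ²−π²)^{−1/2} (ts)^{−1/2} ρ̃(t/s;λ); set ã(t,s) = π⁻² (ts)^{−1/2} σ₁(t/s), where σ₁(u) = ((1+u²)/(1−u²)) ln u. Then for each λ > π the integral ∫₀^∞ ∫₀^∞ ⟨ln t⟩^{−2α} |ã(t,s;λ) − ã(t,s)|² ⟨ln s⟩^{−2α} dt ds is finite, and it tends to 0 as λ → π⁺. (Equivalently, the weighted integral operators Q^{−α} Ã(λ) Q^{−α} converge in Hilbert–Schmidt norm as λ → π⁺ to Q^{−α} Ã Q^{−α}, where Q is multiplication by ⟨ln t⟩.) -/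

import Mathlib

/-!
In the logarithmic variables `x = ln t`, `y = ln s`, the integral is that of
`⟨x⟩^{-2α} |K_λ(x - y)|² ⟨y⟩^{-2α}` over the plane, for a convolution kernel `K_λ`, and dominated
convergence applies.

*Domination.* With `u = e^z` one has `ρ̃(u;λ) = sinh((1 - θ)z) / sinh z - 1` (`rho_exp_eq`), so
the mean value theorem and `z coth z ≤ 1 + |z|` give `|ρ̃| ≤ θ (1 + |z|)` (`abs_rhot_le`). As
`θ(λ) ≤ √(λ² - π²)`, the kernel `ã(t,s;λ)` is bounded by `(ts)^{-1/2} (1 + |ln (t/s)|)` uniformly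
in `λ > π` (`abs_atil_le`), and the limit kernel inherits this bound (`abs_atil0_le`). Since
`(1 + |x - y|)² ≤ 4 ⟨x⟩² ⟨y⟩²`, the integrand is at most a constant times
`⟨x⟩^{2 - 2α} ⟨y⟩^{2 - 2α}` (`integrand_le`), which is integrable exactly because `α > 3/2`
(`lintegral_domFactor_lt_top`).

*Pointwise convergence.* For fixed `t, s` the convergence `ã(t,s;λ) → ã(t,s)` is that of a
difference quotient at `0` in the variable `√(λ² - π²)` (`tendsto_atil`). It holds on the diagonal too, where
division by zero makes both kernels vanish.
-/

open MeasureTheory Set Filter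

noncomputable section

/-- `⟨ln t⟩ = (1 + (ln t)²)^{1/2}`. -/
def wlog (t : ℝ) : ℝ := Real.sqrt (1 + Real.log t ^ 2)

/-- `θ(λ) = π⁻¹ arctan(π⁻¹ √(λ²−π²))` for `λ > π`. -/
def thetafun (lam : ℝ) : ℝ :=
  Real.pi⁻¹ * Real.arctan (Real.pi⁻¹ * Real.sqrt (lam ^ 2 - Real.pi ^ 2))

/-- `ρ̃(u;λ) = (u^{θ(λ)} − 1)/(1 − u²) + (u^{−θ(λ)} − 1)/(1 − u⁻²)`. -/
def rhot (u lam : ℝ) : ℝ :=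
  (u ^ thetafun lam - 1) / (1 - u ^ 2) + (u ^ (-thetafun lam) - 1) / (1 - (u ^ 2)⁻¹)

/-- `ã(t,s;λ) = (λ²−π²)^{−1/2} (ts)^{−1/2} ρ̃(t/s;λ)`. -/
def atil (t s lam : ℝ) : ℝ :=
  (lam ^ 2 - Real.pi ^ 2) ^ (-(1/2) : ℝ) * (t * s) ^ (-(1/2) : ℝ) * rhot (t / s) lam

/-- `ã(t,s) = π⁻² (ts)^{−1/2} σ₁(t/s)` with `σ₁(u) = ((1+u²)/(1−u²)) ln u`. -/
def atil0 (t s : ℝ) : ℝ :=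
  (Real.pi ^ 2)⁻¹ * (t * s) ^ (-(1/2) : ℝ) *
    (((1 + (t / s) ^ 2) / (1 - (t / s) ^ 2)) * Real.log (t / s))

/-- The weighted squared-difference integral. -/
def hsInt (α lam : ℝ) : ENNReal :=
  ∫⁻ t in Ioi (0 : ℝ), ∫⁻ s in Ioi (0 : ℝ),
    ENNReal.ofReal (wlog t ^ (-(2 * α)) * |atil t s lam - atil0 t s| ^ 2 * wlog s ^ (-(2 * α)))


/-! ### Uniform bounds on the kernel -/

/-- In the variable `x = log u`, the kernel `ρ̃` is `sinh ((1 - θ) x) / sinh x - 1`. -/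
lemma rho_exp_eq {x θ : ℝ} (hx : x ≠ 0) :
    (Real.exp x ^ θ - 1) / (1 - Real.exp x ^ 2)
      + (Real.exp x ^ (-θ) - 1) / (1 - (Real.exp x ^ 2)⁻¹)
      = Real.sinh ((1 - θ) * x) / Real.sinh x - 1 := by
  have hs : Real.sinh x ≠ 0 := fun h => hx (Real.sinh_eq_zero.1 h)
  have e1 : Real.exp x ^ θ = Real.exp (x * θ) := (Real.exp_mul x θ).symm
  have e2 : Real.exp x ^ (-θ) = (Real.exp (x * θ))⁻¹ := by
    rw [Real.rpow_neg (Real.exp_pos x).le, e1]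
  have e3 : Real.exp ((1 - θ) * x) = Real.exp x / Real.exp (x * θ) := by
    rw [← Real.exp_sub]; ring_nf
  have e4 : Real.exp (-((1 - θ) * x)) = Real.exp (x * θ) / Real.exp x := by
    rw [← Real.exp_sub]; ring_nf
  have h1 : Real.exp x ^ 2 ≠ 1 := by
    intro h
    rw [← Real.exp_nat_mul, Real.exp_eq_one_iff] at h
    apply hx
    simpa using h
  rw [Real.sinh_eq x] at hs ⊢
  rw [Real.sinh_eq ((1 - θ) * x), e1, e2, e3, e4]
  rw [Real.exp_neg] at hs ⊢
  have ha := Real.exp_pos x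
  have hb := Real.exp_pos (x * θ)
  generalize Real.exp x = a at *
  generalize Real.exp (x * θ) = b at *
  have h2 : a ^ 2 - 1 ≠ 0 := sub_ne_zero.2 h1
  have h3 : 1 - a ^ 2 ≠ 0 := sub_ne_zero.2 h1.symm
  have h4 : 1 - (a ^ 2)⁻¹ = (a ^ 2 - 1) / a ^ 2 := by field_simp
  have h5 : (a - a⁻¹) / 2 = (a ^ 2 - 1) / (2 * a) := by field_simp
  have h6 : (1 - a ^ 2) = - (a ^ 2 - 1) := by ring
  rw [h4, h5, h6]
  field_simp
  ring

/-- Uses `sinh x - sinh y ≤ (x - y) cosh x` for `0 ≤ y ≤ x`, together with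
`x coth x ≤ 1 + x`. -/
lemma sinh_ratio_bound {x θ : ℝ} (hx : 0 < x) (h0 : 0 ≤ θ) (h1 : θ ≤ 1) :
    |Real.sinh ((1 - θ) * x) / Real.sinh x - 1| ≤ θ * (1 + x) := by
  have hs : 0 < Real.sinh x := Real.sinh_pos_iff.2 hx
  have hy : 0 ≤ (1 - θ) * x := mul_nonneg (by linarith) hx.le
  have hyx : (1 - θ) * x ≤ x := by nlinarith
  have hle : Real.sinh ((1 - θ) * x) ≤ Real.sinh x := Real.sinh_le_sinh.2 hyx
  have hmvt : Real.sinh x - Real.sinh ((1 - θ) * x) ≤ Real.cosh x * (x - (1 - θ) * x) := by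
    refine (convex_Icc 0 x).image_sub_le_mul_sub_of_deriv_le
      Real.continuous_sinh.continuousOn Real.differentiable_sinh.differentiableOn ?_ _ ⟨hy, hyx⟩ _
      ⟨hx.le, le_rfl⟩ hyx
    intro z hz
    rw [interior_Icc] at hz
    rw [Real.deriv_sinh, Real.cosh_le_cosh, abs_of_pos hz.1, abs_of_pos hx]
    exact hz.2.le
  have hcoth : x * Real.cosh x ≤ (1 + x) * Real.sinh x := by
    have e : Real.cosh x - Real.sinh x = Real.exp (-x) := Real.cosh_sub_sinh x
    have e' : Real.exp (-x) ≤ 1 := Real.exp_le_one_iff.2 (by linarith)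
    have : x ≤ Real.sinh x := Real.self_le_sinh_iff.2 hx.le
    nlinarith
  rw [div_sub_one hs.ne', abs_div, abs_of_pos hs, div_le_iff₀ hs, abs_of_nonpos (by linarith)]
  nlinarith [mul_le_mul_of_nonneg_left hcoth h0]

lemma thetafun_nonneg (lam : ℝ) : 0 ≤ thetafun lam := by
  unfold thetafun
  have := Real.pi_pos
  have : 0 ≤ Real.arctan (Real.pi⁻¹ * Real.sqrt (lam ^ 2 - Real.pi ^ 2)) :=
    Real.arctan_nonneg.2 (by positivity)
  positivity

lemma thetafun_le_one (lam : ℝ) : thetafun lam ≤ 1 := by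
  unfold thetafun
  have := Real.pi_pos
  rw [inv_mul_le_iff₀ Real.pi_pos]
  linarith [Real.arctan_lt_pi_div_two (Real.pi⁻¹ * Real.sqrt (lam ^ 2 - Real.pi ^ 2))]

lemma thetafun_le_sqrt (lam : ℝ) : thetafun lam ≤ Real.sqrt (lam ^ 2 - Real.pi ^ 2) := by
  unfold thetafun
  have h3 := Real.pi_gt_three
  have hd := Real.sqrt_nonneg (lam ^ 2 - Real.pi ^ 2)
  have hi : Real.pi⁻¹ ≤ 1 := inv_le_one_of_one_le₀ (by linarith)
  have hi0 : 0 ≤ Real.pi⁻¹ := by positivity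
  have h : Real.arctan (Real.pi⁻¹ * Real.sqrt (lam ^ 2 - Real.pi ^ 2))
      ≤ Real.pi⁻¹ * Real.sqrt (lam ^ 2 - Real.pi ^ 2) :=
    (Real.le_tan (Real.arctan_nonneg.2 (by positivity)) (Real.arctan_lt_pi_div_two _)).trans_eq
      (Real.tan_arctan _)
  nlinarith [mul_le_mul_of_nonneg_left h hi0, mul_le_mul_of_nonneg_right hi hd,
    mul_nonneg hi0 hd]

lemma abs_rhot_le {u : ℝ} (hu : 0 < u) (lam : ℝ) :
    |rhot u lam| ≤ thetafun lam * (1 + |Real.log u|) := by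
  have h0 := thetafun_nonneg lam
  have h1 := thetafun_le_one lam
  unfold rhot
  obtain ⟨x, rfl⟩ : ∃ x, u = Real.exp x := ⟨Real.log u, (Real.exp_log hu).symm⟩
  rw [Real.log_exp]
  rcases lt_trichotomy x 0 with hx | rfl | hx
  · rw [rho_exp_eq hx.ne, abs_of_neg hx]
    have := sinh_ratio_bound (neg_pos.2 hx) h0 h1
    rwa [mul_neg, Real.sinh_neg, Real.sinh_neg, neg_div_neg_eq] at this
  · simpa using h0
  · rw [rho_exp_eq hx.ne', abs_of_pos hx]
    exact sinh_ratio_bound hx h0 h1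

lemma abs_atil_le {t s lam : ℝ} (ht : 0 < t) (hs : 0 < s) (hl : Real.pi < lam) :
    |atil t s lam| ≤ (t * s) ^ (-(1/2) : ℝ) * (1 + |Real.log (t / s)|) := by
  have hp := Real.pi_pos
  have hd : 0 < lam ^ 2 - Real.pi ^ 2 := by nlinarith
  have hr := abs_rhot_le (div_pos ht hs) lam
  have hA : 0 ≤ (t * s) ^ (-(1/2) : ℝ) := by positivity
  have hB : (lam ^ 2 - Real.pi ^ 2) ^ (-(1/2) : ℝ) * thetafun lam ≤ 1 := by
    rw [Real.rpow_neg hd.le, ← Real.sqrt_eq_rpow, inv_mul_le_iff₀ (Real.sqrt_pos.2 hd), mul_one]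
    exact thetafun_le_sqrt lam
  have hB0 : 0 ≤ (lam ^ 2 - Real.pi ^ 2) ^ (-(1/2) : ℝ) := by positivity
  unfold atil
  rw [abs_mul, abs_mul, abs_of_nonneg hA, abs_of_nonneg hB0]
  calc (lam ^ 2 - Real.pi ^ 2) ^ (-(1/2) : ℝ) * (t * s) ^ (-(1/2) : ℝ) * |rhot (t / s) lam|
      ≤ (lam ^ 2 - Real.pi ^ 2) ^ (-(1/2) : ℝ) * (t * s) ^ (-(1/2) : ℝ)
        * (thetafun lam * (1 + |Real.log (t / s)|)) := by gcongr
    _ = ((lam ^ 2 - Real.pi ^ 2) ^ (-(1/2) : ℝ) * thetafun lam)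
        * ((t * s) ^ (-(1/2) : ℝ) * (1 + |Real.log (t / s)|)) := by ring
    _ ≤ 1 * ((t * s) ^ (-(1/2) : ℝ) * (1 + |Real.log (t / s)|)) := by gcongr
    _ = _ := one_mul _

/-! ### Pointwise convergence -/

/-- The limit is a derivative at `δ = 0` in the variable `δ = √(λ² - π²)`: the map
`δ ↦ ρ̃` vanishes at `0`, and there `θ` has derivative `π⁻²` in `δ` while `ρ̃` has derivative
`σ₁` in `θ`. -/
lemma tendsto_atil {t s : ℝ} (ht : 0 < t) (hs : 0 < s) :
    Tendsto (fun lam => atil t s lam) (nhdsWithin Real.pi (Ioi Real.pi)) (nhds (atil0 t s)) := by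
  have hu : 0 < t / s := div_pos ht hs
  unfold atil atil0 rhot
  -- the case `u = 1` is included: there both sides are zero, as all denominators vanish
  generalize t / s = u at *
  have hp := Real.pi_pos
  set L := Real.log u with hL
  set th : ℝ → ℝ := fun d => Real.pi⁻¹ * Real.arctan (Real.pi⁻¹ * d) with hth
  have hth0 : th 0 = 0 := by simp [hth]
  have dth : HasDerivAt th (Real.pi ^ 2)⁻¹ 0 := by
    have h1 : HasDerivAt (fun d : ℝ => Real.pi⁻¹ * d) (Real.pi⁻¹ * 1) 0 :=
      (hasDerivAt_id (0 : ℝ)).const_mul _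
    have h2 := (h1.arctan).const_mul Real.pi⁻¹
    refine h2.congr_deriv ?_
    simp only [mul_zero]
    ring
  have d1 : HasDerivAt (fun d => u ^ th d) (L * (Real.pi ^ 2)⁻¹) 0 := by
    have := dth.const_rpow hu
    refine this.congr_deriv ?_
    rw [hth0, Real.rpow_zero]; ring
  have d2 : HasDerivAt (fun d => u ^ (-th d)) (-(L * (Real.pi ^ 2)⁻¹)) 0 := by
    have := dth.neg.const_rpow hu
    refine this.congr_deriv ?_
    rw [Pi.neg_apply, hth0, neg_zero, Real.rpow_zero]; ring
  set G : ℝ → ℝ := fun d => (u ^ th d - 1) / (1 - u ^ 2) + (u ^ (-th d) - 1) / (1 - (u ^ 2)⁻¹)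
    with hG
  have dG : HasDerivAt G ((Real.pi ^ 2)⁻¹ * ((1 + u ^ 2) / (1 - u ^ 2) * L)) 0 := by
    have := ((d1.sub_const 1).div_const (1 - u ^ 2)).add
      ((d2.sub_const 1).div_const (1 - (u ^ 2)⁻¹))
    refine this.congr_deriv ?_
    by_cases h1 : u = 1
    · simp [h1]
    · have h2 : u ^ 2 - 1 ≠ 0 := by
        intro h
        have : (u - 1) * (u + 1) = 0 := by linarith
        rcases mul_eq_zero.1 this with h | h
        · exact h1 (by linarith)
        · linarith
      have h4 : 1 - (u ^ 2)⁻¹ = (u ^ 2 - 1) / u ^ 2 := by field_simp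
      have h6 : (1 - u ^ 2) = - (u ^ 2 - 1) := by ring
      rw [h4, h6]
      field_simp
      ring
  have hG0 : G 0 = 0 := by simp [hG, hth0]
  have hsl := hasDerivAt_iff_tendsto_slope_zero.1 dG
  have hδ : Tendsto (fun lam : ℝ => Real.sqrt (lam ^ 2 - Real.pi ^ 2))
      (nhdsWithin Real.pi (Ioi Real.pi)) (nhdsWithin 0 {0}ᶜ) := by
    refine tendsto_nhdsWithin_iff.2 ⟨?_, ?_⟩
    · have hc : Continuous (fun lam : ℝ => Real.sqrt (lam ^ 2 - Real.pi ^ 2)) := by fun_prop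
      have := (hc.tendsto Real.pi).mono_left (nhdsWithin_le_nhds (s := Ioi Real.pi))
      simpa using this
    · filter_upwards [self_mem_nhdsWithin] with lam hl
      have hl : Real.pi < lam := hl
      have hd : 0 < lam ^ 2 - Real.pi ^ 2 := by nlinarith
      exact (Real.sqrt_pos.2 hd).ne'
  have hfin := (hsl.comp hδ).const_mul ((t * s) ^ (-(1/2) : ℝ))
  refine (hfin.congr' ?_).trans_eq ?_
  · filter_upwards [self_mem_nhdsWithin] with lam hl
    have hl : Real.pi < lam := hl
    have hd : 0 < lam ^ 2 - Real.pi ^ 2 := by nlinarith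
    rw [Real.rpow_neg hd.le, ← Real.sqrt_eq_rpow]
    simp only [Function.comp_apply, zero_add, hG0, sub_zero, smul_eq_mul]
    simp only [hG, hth, thetafun]
    ring
  · congr 1; ring

/-- The bound on `ã(·,·;λ)` is uniform in `λ`, hence passes to the limit `λ → π⁺`. -/
lemma abs_atil0_le {t s : ℝ} (ht : 0 < t) (hs : 0 < s) :
    |atil0 t s| ≤ (t * s) ^ (-(1/2) : ℝ) * (1 + |Real.log (t / s)|) := by
  refine le_of_tendsto (tendsto_atil ht hs).abs ?_
  filter_upwards [self_mem_nhdsWithin] with lam hl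
  exact abs_atil_le ht hs hl

/-! ### Domination and integrability -/

/-- One factor of the dominating function: `t⁻¹ ⟨ln t⟩^{2 - 2α}`, which becomes
`(1 + x²)^{1 - α}` with respect to `dx`, `x = ln t`. -/
def domFactor (α t : ℝ) : ℝ := t⁻¹ * (1 + Real.log t ^ 2) ^ (1 - α)

lemma domFactor_nonneg (α : ℝ) {t : ℝ} (ht : 0 < t) : 0 ≤ domFactor α t := by
  unfold domFactor; positivity

lemma measurable_domFactor (α : ℝ) : Measurable (domFactor α) := by
  unfold domFactor; fun_prop

/-- This is where `α > 3/2` enters: `(1 + x²)^{1 - α}` is integrable on `ℝ` for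
`2α - 2 > 1`. -/
lemma lintegral_domFactor_lt_top {α : ℝ} (hα : 3/2 < α) :
    ∫⁻ t in Ioi (0 : ℝ), ENNReal.ofReal (domFactor α t) < ⊤ := by
  rw [← Real.range_exp, ← image_univ,
    lintegral_image_eq_lintegral_abs_deriv_mul MeasurableSet.univ
      (fun x _ => (Real.hasDerivAt_exp x).hasDerivWithinAt) Real.exp_injective.injOn,
    Measure.restrict_univ]
  have hint : Integrable (fun x : ℝ => (1 + ‖x‖ ^ 2) ^ (-(2 * α - 2) / 2)) :=
    integrable_rpow_neg_one_add_norm_sq (by simp; linarith)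
  refine lt_of_le_of_lt (lintegral_mono fun x => ?_) hint.lintegral_lt_top
  rw [← ENNReal.ofReal_mul (abs_nonneg _)]
  refine le_of_eq (congrArg _ ?_)
  rw [domFactor, Real.log_exp, abs_of_pos (Real.exp_pos x), ← mul_assoc,
    mul_inv_cancel₀ (Real.exp_pos x).ne', one_mul, Real.norm_eq_abs, sq_abs]
  ring_nf

/-- The off-diagonal growth is absorbed by two powers of the weights:
`(1 + |x - y|)² ≤ 2 + 2 (x - y)² ≤ 4 (1 + x²) (1 + y²)` with `x = log t`, `y = log s`. -/
lemma integrand_le (α : ℝ) {t s lam : ℝ} (ht : 0 < t) (hs : 0 < s) (hl : Real.pi < lam) :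
    wlog t ^ (-(2 * α)) * |atil t s lam - atil0 t s| ^ 2 * wlog s ^ (-(2 * α))
      ≤ 16 * (domFactor α t * domFactor α s) := by
  have hts : 0 < t * s := mul_pos ht hs
  have hdiff : |atil t s lam - atil0 t s|
      ≤ 2 * ((t * s) ^ (-(1/2) : ℝ) * (1 + |Real.log (t / s)|)) := by
    linarith [abs_sub (atil t s lam) (atil0 t s), abs_atil_le ht hs hl, abs_atil0_le ht hs]
  have hpow : ((t * s) ^ (-(1/2) : ℝ)) ^ 2 = t⁻¹ * s⁻¹ := by
    rw [← Real.rpow_natCast, ← Real.rpow_mul hts.le, ← mul_inv, ← Real.rpow_neg_one]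
    norm_num
  have hlog : Real.log (t / s) = Real.log t - Real.log s := Real.log_div ht.ne' hs.ne'
  have hw (r : ℝ) : wlog r ^ (-(2 * α)) = (1 + Real.log r ^ 2) ^ (-α) := by
    unfold wlog
    rw [Real.sqrt_eq_rpow, ← Real.rpow_mul (by positivity)]
    ring_nf
  have hsplit (r : ℝ) : (1 + Real.log r ^ 2) ^ (1 - α)
      = (1 + Real.log r ^ 2) ^ (-α) * (1 + Real.log r ^ 2) := by
    rw [sub_eq_neg_add, Real.rpow_add_one (by positivity)]
  have hpeetre : (1 + |Real.log t - Real.log s|) ^ 2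
      ≤ 4 * ((1 + Real.log t ^ 2) * (1 + Real.log s ^ 2)) := by
    generalize Real.log t = x
    generalize Real.log s = y
    have h1 : |x - y| ^ 2 = (x - y) ^ 2 := sq_abs _
    nlinarith [sq_nonneg (1 - |x - y|), sq_nonneg (x + y), sq_nonneg (x * y), sq_nonneg x,
      sq_nonneg y]
  have hsq : |atil t s lam - atil0 t s| ^ 2
      ≤ 16 * (t⁻¹ * s⁻¹ * ((1 + Real.log t ^ 2) * (1 + Real.log s ^ 2))) := by
    calc |atil t s lam - atil0 t s| ^ 2
        ≤ (2 * ((t * s) ^ (-(1/2) : ℝ) * (1 + |Real.log (t / s)|))) ^ 2 := by gcongr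
      _ = 4 * (t⁻¹ * s⁻¹) * (1 + |Real.log t - Real.log s|) ^ 2 := by
          rw [mul_pow, mul_pow, hpow, hlog]; ring
      _ ≤ 4 * (t⁻¹ * s⁻¹) * (4 * ((1 + Real.log t ^ 2) * (1 + Real.log s ^ 2))) := by gcongr
      _ = _ := by ring
  rw [domFactor, domFactor, hw, hw, hsplit, hsplit]
  calc (1 + Real.log t ^ 2) ^ (-α) * |atil t s lam - atil0 t s| ^ 2 * (1 + Real.log s ^ 2) ^ (-α)
      ≤ (1 + Real.log t ^ 2) ^ (-α)
        * (16 * (t⁻¹ * s⁻¹ * ((1 + Real.log t ^ 2) * (1 + Real.log s ^ 2))))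
        * (1 + Real.log s ^ 2) ^ (-α) := by gcongr
    _ = _ := by ring

lemma measurable_integrand (α lam : ℝ) : Measurable (fun p : ℝ × ℝ => ENNReal.ofReal
    (wlog p.1 ^ (-(2 * α)) * |atil p.1 p.2 lam - atil0 p.1 p.2| ^ 2 * wlog p.2 ^ (-(2 * α)))) := by
  unfold atil atil0 rhot wlog
  fun_prop

lemma hsInt_eq (α lam : ℝ) : hsInt α lam =
    ∫⁻ p, ENNReal.ofReal (wlog p.1 ^ (-(2 * α)) * |atil p.1 p.2 lam - atil0 p.1 p.2| ^ 2
      * wlog p.2 ^ (-(2 * α)))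
      ∂((volume.restrict (Ioi (0 : ℝ))).prod (volume.restrict (Ioi (0 : ℝ)))) := by
  rw [lintegral_prod _ (measurable_integrand α lam).aemeasurable]
  rfl

lemma lintegral_dom_lt_top {α : ℝ} (hα : 3/2 < α) :
    ∫⁻ p : ℝ × ℝ, 16 * (ENNReal.ofReal (domFactor α p.1) * ENNReal.ofReal (domFactor α p.2))
      ∂((volume.restrict (Ioi (0 : ℝ))).prod (volume.restrict (Ioi (0 : ℝ)))) < ⊤ := by
  have hm := (measurable_domFactor α).ennreal_ofReal
  rw [lintegral_const_mul' _ _ (by simp), lintegral_prod_mul hm.aemeasurable hm.aemeasurable]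
  have h := lintegral_domFactor_lt_top hα
  exact ENNReal.mul_lt_top (by simp) (ENNReal.mul_lt_top h h)

lemma ae_quadrant {P : ℝ × ℝ → Prop} (h : ∀ t s : ℝ, 0 < t → 0 < s → P (t, s)) :
    ∀ᵐ p ∂((volume.restrict (Ioi (0 : ℝ))).prod (volume.restrict (Ioi (0 : ℝ)))), P p := by
  rw [Measure.prod_restrict]
  exact ae_restrict_of_forall_mem (measurableSet_Ioi.prod measurableSet_Ioi)
    fun p hp => h p.1 p.2 hp.1 hp.2

lemma ae_integrand_le (α : ℝ) {lam : ℝ} (hl : Real.pi < lam) :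
    ∀ᵐ p : ℝ × ℝ ∂((volume.restrict (Ioi (0 : ℝ))).prod (volume.restrict (Ioi (0 : ℝ)))),
      ENNReal.ofReal (wlog p.1 ^ (-(2 * α)) * |atil p.1 p.2 lam - atil0 p.1 p.2| ^ 2
        * wlog p.2 ^ (-(2 * α)))
      ≤ 16 * (ENNReal.ofReal (domFactor α p.1) * ENNReal.ofReal (domFactor α p.2)) := by
  refine ae_quadrant fun t s ht hs => ?_
  have h16 : (16 : ENNReal) = ENNReal.ofReal 16 := by simp
  rw [← ENNReal.ofReal_mul (domFactor_nonneg α ht), h16, ← ENNReal.ofReal_mul (by norm_num)]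
  exact ENNReal.ofReal_le_ofReal (integrand_le α ht hs hl)

/-- For `α > 3/2`, the weighted integral
`∫₀^∞∫₀^∞ ⟨ln t⟩^{−2α} |ã(t,s;λ) − ã(t,s)|² ⟨ln s⟩^{−2α} dt ds` is finite for each `λ > π` and
tends to `0` as `λ → π⁺`; i.e. `Q^{−α} Ã(λ) Q^{−α} → Q^{−α} Ã Q^{−α}` in Hilbert–Schmidt
norm as `λ → π⁺`. -/
theorem atil_hilbert_schmidt_convergence (α : ℝ) (hα : 3/2 < α) :
    (∀ lam : ℝ, Real.pi < lam → hsInt α lam < ⊤) ∧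
    Tendsto (hsInt α) (nhdsWithin Real.pi (Ioi Real.pi)) (nhds 0) := by
  constructor
  · intro lam hl
    rw [hsInt_eq]
    exact (lintegral_mono_ae (ae_integrand_le α hl)).trans_lt (lintegral_dom_lt_top hα)
  · rw [show hsInt α = _ from funext (hsInt_eq α)]
    rw [← lintegral_zero (μ := (volume.restrict (Ioi (0 : ℝ))).prod (volume.restrict (Ioi (0 : ℝ))))]
    refine tendsto_lintegral_filter_of_dominated_convergence _
      (Eventually.of_forall fun lam => measurable_integrand α lam) ?_
      (lintegral_dom_lt_top hα).ne ?_
    · filter_upwards [self_mem_nhdsWithin] with lam hl using ae_integrand_le α hl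
    · refine ae_quadrant fun t s ht hs => ?_
      have h := (((((tendsto_atil ht hs).sub_const (atil0 t s)).abs.pow 2).const_mul
        (wlog t ^ (-(2 * α)))).mul_const (wlog s ^ (-(2 * α))))
      simpa using ENNReal.tendsto_ofReal h
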